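/- Let h > 0, let L : ℝⁿ × ℝⁿ → ℝ be C², let f_L : ℝⁿ × ℝⁿ × ℝᵐ → ℝⁿ be continuous, and let u : [0,h] → ℝᵐ be continuous. Let V ⊆ ℝⁿ × ℝⁿ be open and let 𝒬 : V × [0,h] → ℝⁿ be C² such that for each (q₀,q₁) ∈ V, the curve t ↦ 𝒬(q₀,q₁,t) solves the forced Euler–Lagrange equations for (L, f_L, u) and satisfies 𝒬(q₀,q₁,0) = q₀ and 𝒬(q₀,q₁,h) = q₁. Define the exact discrete Lagrangian L_d^E(q₀,q₁) = ∫₀ʰ L(𝒬(q₀,q₁,t), 𝒬̇(q₀,q₁,t)) dt and the exact left discrete force f_d^{E+}(q₀,q₁) = ∫₀ʰ (∂𝒬/∂q₁(q₀,q₁,t))ᵀ · f_L(𝒬(q₀,q₁,t), 𝒬̇(q₀,q₁,t), u(t)) dt, where 𝒬̇ denotes ∂𝒬/∂t. Then for all (q₀,q₁) ∈ V: D₂L_d^E(q₀,q₁) + f_d^{E+}(q₀,q₁) = D₂L(𝒬(q₀,q₁,h), 𝒬̇(q₀,q₁,h)), i.e. the exact forced discrete Legendre transform 𝔽^{f+}L_d^E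 agrees with the continuous Legendre transform 𝔽L evaluated at the final point of the solution curve. -/

import Mathlib

open scoped RealInnerProductSpace

noncomputable section

abbrev Evec (n : ℕ) := EuclideanSpace ℝ (Fin n)

theorem aux_partial {E : Type*} [NormedAddCommGroup E] [NormedSpace ℝ E]
    (G : E × ℝ → ℝ) (hG : ContDiff ℝ 1 G) (b : E) (t : ℝ) :
    HasFDerivAt (fun c => G (c, t))
      ((fderiv ℝ G (b, t)).comp (ContinuousLinearMap.inl ℝ E ℝ)) b :=
  ((hG.differentiable (by norm_num) (b, t)).hasFDerivAt).comp b (hasFDerivAt_prodMk_left b t)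

theorem aux_param {E : Type*} [NormedAddCommGroup E] [NormedSpace ℝ E] [ProperSpace E]
    (G : E × ℝ → ℝ) (hG : ContDiff ℝ 1 G) (h : ℝ) (b : E) :
    HasFDerivAt (fun y => ∫ t in (0:ℝ)..h, G (y, t))
      (∫ t in (0:ℝ)..h, (fderiv ℝ G (b, t)).comp (ContinuousLinearMap.inl ℝ E ℝ)) b := by
  have hc : Continuous (fun p : E × ℝ =>
      (fderiv ℝ G p).comp (ContinuousLinearMap.inl ℝ E ℝ)) :=
    (hG.continuous_fderiv (by norm_num)).clm_comp continuous_const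
  have hGc := hG.continuous
  obtain ⟨C, hC⟩ := ((isCompact_closedBall b 1).prod
    (isCompact_uIcc (a := (0:ℝ)) (b := h))).exists_bound_of_continuousOn hc.continuousOn
  refine intervalIntegral.hasFDerivAt_integral_of_dominated_of_fderiv_le
    (F := fun y t => G (y, t))
    (F' := fun y t => (fderiv ℝ G (y, t)).comp (ContinuousLinearMap.inl ℝ E ℝ))
    (bound := fun _ => C) (Metric.closedBall_mem_nhds b one_pos) ?_ ?_ ?_ ?_ ?_ ?_
  · refine Filter.Eventually.of_forall fun y => ?_
    exact (hGc.comp (by fun_prop : Continuous fun t : ℝ => (y, t))).aestronglyMeasurable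
  · exact (hGc.comp (by fun_prop : Continuous fun t : ℝ => (b, t))).intervalIntegrable _ _
  · exact (hc.comp (by fun_prop : Continuous fun t : ℝ => (b, t))).aestronglyMeasurable
  · refine Filter.Eventually.of_forall fun t ht y hy => ?_
    exact hC (y, t) ⟨hy, Set.uIoc_subset_uIcc ht⟩
  · exact intervalIntegrable_const
  · refine Filter.Eventually.of_forall fun t ht y hy => ?_
    have h1 := (hG.differentiable (by norm_num) (y, t)).hasFDerivAt
    exact h1.comp y (hasFDerivAt_prodMk_left y t)

/-- The exact forced discrete Legendre transform `𝔽^{f+}L_d^E` agrees with the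
continuous Legendre transform `𝔽L` at the final point of the solution
curve. -/
theorem stmt_8 {n m : ℕ} (h : ℝ) (hh : 0 < h)
    (L : Evec n × Evec n → ℝ) (hL : ContDiff ℝ 2 L)
    (fL : Evec n × Evec n × Evec m → Evec n) (hfL : Continuous fL)
    (u : ℝ → Evec m) (hu : Continuous u)
    (V : Set (Evec n × Evec n)) (hV : IsOpen V)
    (Qf : (Evec n × Evec n) × ℝ → Evec n) (hQf : ContDiff ℝ 2 Qf)
    (hbd0 : ∀ x ∈ V, Qf (x, 0) = x.1)
    (hbdh : ∀ x ∈ V, Qf (x, h) = x.2)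
    (hEL : ∀ x ∈ V, ∀ t ∈ Set.Icc (0:ℝ) h,
      gradient (fun y => L (y, deriv (fun τ => Qf (x, τ)) t)) (Qf (x, t))
        - deriv (fun σ => gradient (fun v => L (Qf (x, σ), v))
            (deriv (fun τ => Qf (x, τ)) σ)) t
        + fL (Qf (x, t), deriv (fun τ => Qf (x, τ)) t, u t) = 0)
    (LdE : Evec n × Evec n → ℝ)
    (hLdE : ∀ x, LdE x = ∫ t in (0:ℝ)..h, L (Qf (x, t), deriv (fun τ => Qf (x, τ)) t))
    (fdEp : Evec n × Evec n → Evec n)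
    (hfdEp : ∀ x : Evec n × Evec n, fdEp x = ∫ t in (0:ℝ)..h,
      (ContinuousLinearMap.adjoint (fderiv ℝ (fun b => Qf ((x.1, b), t)) x.2))
        (fL (Qf (x, t), deriv (fun τ => Qf (x, τ)) t, u t))) :
    ∀ x ∈ V,
      gradient (fun b => LdE (x.1, b)) x.2 + fdEp x
        = gradient (fun v => L (Qf (x, h), v)) (deriv (fun τ => Qf (x, τ)) h) := by
  intro x hx
  obtain ⟨a, b⟩ := x
  have hQd : ∀ p, HasFDerivAt Qf (fderiv ℝ Qf p) p := fun p =>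
    (hQf.differentiable (by norm_num) p).hasFDerivAt
  have hF1 : ContDiff ℝ 1 (fderiv ℝ Qf) := hQf.fderiv_right (by norm_num)
  have hLd : ∀ p, HasFDerivAt L (fderiv ℝ L p) p := fun p =>
    (hL.differentiable (by norm_num) p).hasFDerivAt
  have hL1 : ContDiff ℝ 1 (fderiv ℝ L) := hL.fderiv_right (by norm_num)
  have hFd : ∀ p, HasFDerivAt (fderiv ℝ Qf) (fderiv ℝ (fderiv ℝ Qf) p) p := fun p =>
    (hF1.differentiable (by norm_num) p).hasFDerivAt
  have hline : ∀ (y : Evec n × Evec n) (t : ℝ),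
      HasDerivAt (fun τ : ℝ => (y, τ)) ((0 : Evec n × Evec n), (1:ℝ)) t := fun y t =>
    (hasDerivAt_const t y).prodMk (hasDerivAt_id t)
  have hdv : ∀ y t, deriv (fun τ => Qf (y, τ)) t = fderiv ℝ Qf (y, t) (0, 1) := fun y t =>
    ((hQd (y, t)).comp_hasDerivAt t (hline y t)).deriv
  have hg2 : ∀ q v, gradient (fun v => L (q, v)) v
      = (InnerProductSpace.toDual ℝ (Evec n)).symm
        ((fderiv ℝ L (q, v)).comp (ContinuousLinearMap.inr ℝ (Evec n) (Evec n))) := by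
    intro q v
    rw [gradient]
    congr 1
    exact ((hLd (q, v)).comp v (hasFDerivAt_prodMk_right q v)).fderiv
  have hg1 : ∀ q v, gradient (fun q => L (q, v)) q
      = (InnerProductSpace.toDual ℝ (Evec n)).symm
        ((fderiv ℝ L (q, v)).comp (ContinuousLinearMap.inl ℝ (Evec n) (Evec n))) := by
    intro q v
    rw [gradient]
    congr 1
    exact ((hLd (q, v)).comp q (hasFDerivAt_prodMk_left q v)).fderiv
  have hemb : ∀ (c : Evec n) (t : ℝ), HasFDerivAt (fun c : Evec n => (((a, c), t) : (Evec n × Evec n) × ℝ))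
      ((ContinuousLinearMap.inl ℝ (Evec n × Evec n) ℝ).comp
        (ContinuousLinearMap.inr ℝ (Evec n) (Evec n))) c := fun c t =>
    (hasFDerivAt_prodMk_left (𝕜 := ℝ) (a, c) t).comp c (hasFDerivAt_prodMk_right a c)
  have hdb : ∀ (t : ℝ), fderiv ℝ (fun c => Qf ((a, c), t)) b
      = (fderiv ℝ Qf ((a, b), t)).comp ((ContinuousLinearMap.inl ℝ (Evec n × Evec n) ℝ).comp
        (ContinuousLinearMap.inr ℝ (Evec n) (Evec n))) := fun t =>
    ((hQd ((a, b), t)).comp b (hemb b t)).fderiv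
  -- momentum
  set γ : ℝ → Evec n × Evec n := fun t => (Qf ((a, b), t), fderiv ℝ Qf ((a, b), t) (0, 1)) with hγ
  have hγ1 : ContDiff ℝ 1 γ := by
    have h1 : ContDiff ℝ 1 (fun t : ℝ => (((a, b), t) : (Evec n × Evec n) × ℝ)) := by fun_prop
    exact ((hQf.of_le (by norm_num)).comp h1).prodMk ((hF1.comp h1).clm_apply contDiff_const)
  have hFc : Continuous (fun t : ℝ => fderiv ℝ Qf ((a, b), t)) :=
    hF1.continuous.comp (by fun_prop)
  set p : ℝ → Evec n := fun t => gradient (fun v => L (Qf ((a, b), t), v))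
    (fderiv ℝ Qf ((a, b), t) (0, 1)) with hp
  have hp1 : ContDiff ℝ 1 p := by
    have : p = fun t => (InnerProductSpace.toDual ℝ (Evec n)).symm
        ((fderiv ℝ L (γ t)).comp (ContinuousLinearMap.inr ℝ (Evec n) (Evec n))) := by
      funext t; exact hg2 _ _
    rw [this]
    have h2 : ContDiff ℝ 1 (fun t => (fderiv ℝ L (γ t)).comp
        (ContinuousLinearMap.inr ℝ (Evec n) (Evec n))) :=
      (hL1.comp hγ1).clm_comp contDiff_const
    exact (InnerProductSpace.toDual ℝ (Evec n)).symm.toContinuousLinearEquiv.contDiff.comp h2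
  have hEL' : ∀ t ∈ Set.Icc (0:ℝ) h, deriv p t =
      gradient (fun y => L (y, fderiv ℝ Qf ((a, b), t) (0, 1))) (Qf ((a, b), t))
      + fL (Qf ((a, b), t), fderiv ℝ Qf ((a, b), t) (0, 1), u t) := by
    intro t ht
    have h1 := hEL (a, b) hx t ht
    simp only [hdv] at h1
    rw [hp, eq_comm, ← sub_eq_zero, ← h1]
    abel
  -- the integrand
  set G : Evec n × ℝ → ℝ := fun z =>
    L (Qf ((a, z.1), z.2), fderiv ℝ Qf ((a, z.1), z.2) (0, 1)) with hG
  have hG1 : ContDiff ℝ 1 G := by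
    have h1 : ContDiff ℝ 1 (fun z : Evec n × ℝ => (((a, z.1), z.2) : (Evec n × Evec n) × ℝ)) := by
      fun_prop
    exact (hL.of_le (by norm_num)).comp
      (((hQf.of_le (by norm_num)).comp h1).prodMk ((hF1.comp h1).clm_apply contDiff_const))
  have hLd' : (fun c => LdE (a, c)) = fun c => ∫ t in (0:ℝ)..h, G (c, t) := by
    funext c
    rw [hLdE]
    simp only [hdv, hG]
  have hI := aux_param G hG1 h b
  have hGc : Continuous (fun t : ℝ => (fderiv ℝ G (b, t)).comp
      (ContinuousLinearMap.inl ℝ (Evec n) ℝ)) :=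
    ((hG1.continuous_fderiv (by norm_num)).comp (by fun_prop : Continuous fun t : ℝ => (b, t))).clm_comp
      continuous_const
  have hfc : Continuous (fun t : ℝ => fL (Qf ((a, b), t), fderiv ℝ Qf ((a, b), t) (0, 1), u t)) := by
    have := hQf.continuous
    exact hfL.comp ((this.comp (by fun_prop)).prodMk ((hFc.clm_apply continuous_const).prodMk hu))
  set A : ℝ → Evec n →L[ℝ] Evec n := fun t => (fderiv ℝ Qf ((a, b), t)).comp
    ((ContinuousLinearMap.inl ℝ (Evec n × Evec n) ℝ).comp
        (ContinuousLinearMap.inr ℝ (Evec n) (Evec n))) with hA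
  have hAc : Continuous A := hFc.clm_comp continuous_const
  set f : ℝ → Evec n := fun t => fL (Qf ((a, b), t), fderiv ℝ Qf ((a, b), t) (0, 1), u t) with hf
  have hfd : fdEp (a, b) = ∫ t in (0:ℝ)..h, (ContinuousLinearMap.adjoint (A t)) (f t) := by
    rw [hfdEp]
    simp only [hdv, hdb, hA, hf]
  have hAfc : Continuous (fun t => (ContinuousLinearMap.adjoint (A t)) (f t)) :=
    ((ContinuousLinearMap.adjoint (𝕜 := ℝ) (E := Evec n) (F := Evec n)).continuous.comp hAc).clm_apply hfc
  -- boundary values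
  have hnear : ∀ᶠ c in nhds b, (a, c) ∈ V :=
    (by fun_prop : Continuous fun c : Evec n => (a, c)).continuousAt.eventually (hV.mem_nhds hx)
  have hA0 : A 0 = 0 := by
    simp only [hA]
    rw [← hdb]
    have : (fun c => Qf ((a, c), 0)) =ᶠ[nhds b] fun _ => a := by
      filter_upwards [hnear] with c hc using hbd0 _ hc
    rw [this.fderiv_eq]; simp
  have hAh : A h = ContinuousLinearMap.id ℝ _ := by
    simp only [hA]
    rw [← hdb]
    have : (fun c => Qf ((a, c), h)) =ᶠ[nhds b] fun c => c := by
      filter_upwards [hnear] with c hc using hbdh _ hc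
    rw [this.fderiv_eq]; exact fderiv_id
  simp only [hdv]
  change _ = p h
  refine ext_inner_right ℝ fun w => ?_
  rw [inner_add_left, inner_gradient_left, hLd', hI.fderiv,
    ContinuousLinearMap.intervalIntegral_apply (hGc.intervalIntegrable _ _), hfd]
  have e1 : inner ℝ (∫ t in (0:ℝ)..h, (ContinuousLinearMap.adjoint (A t)) (f t)) w
      = ∫ t in (0:ℝ)..h, inner ℝ (f t) (A t w) := by
    rw [real_inner_comm]
    have := (innerSL ℝ w).intervalIntegral_comp_comm (hAfc.intervalIntegrable (μ := MeasureTheory.volume) 0 h)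
    simp only [innerSL_apply_apply] at this
    rw [← this]
    congr 1
    funext t
    rw [real_inner_comm, ContinuousLinearMap.adjoint_inner_left]
  have hGwc : Continuous (fun t : ℝ => (fderiv ℝ G (b, t)).comp
      (ContinuousLinearMap.inl ℝ (Evec n) ℝ) w) := hGc.clm_apply continuous_const
  have hfAc : Continuous (fun t : ℝ => inner ℝ (f t) (A t w)) :=
    hfc.inner (hAc.clm_apply continuous_const)
  rw [e1, ← intervalIntegral.integral_add (hGwc.intervalIntegrable _ _)
    (hfAc.intervalIntegrable _ _)]
  have key : ∀ t ∈ Set.uIcc 0 h, HasDerivAt (fun t => inner ℝ (p t) (A t w))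
      ((fderiv ℝ G (b, t)).comp (ContinuousLinearMap.inl ℝ (Evec n) ℝ) w
        + inner ℝ (f t) (A t w)) t := by
    intro t ht
    rw [Set.uIcc_of_le hh.le] at ht
    have d1 : HasDerivAt p (deriv p t) t := (hp1.differentiable (by norm_num) t).hasDerivAt
    have d2 : HasDerivAt (fun t => A t w)
        (fderiv ℝ (fderiv ℝ Qf) ((a, b), t) (0, 1) ((0, w), 0)) t := by
      have := ((hFd ((a, b), t)).comp_hasDerivAt t (hline (a, b) t)).clm_apply
        (hasDerivAt_const t (((0, w), 0) : (Evec n × Evec n) × ℝ))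
      simpa [hA] using this
    have d3 := d1.inner ℝ d2
    refine HasDerivAt.congr_deriv d3 (Eq.symm ?_)
    rw [hEL' t ht, inner_add_left, ← add_assoc]
    congr 1
    have hsym : fderiv ℝ (fderiv ℝ Qf) ((a, b), t) (0, 1) ((0, w), 0)
        = fderiv ℝ (fderiv ℝ Qf) ((a, b), t) ((0, w), 0) (0, 1) :=
      (hQf.contDiffAt.isSymmSndFDerivAt (by simp)) _ _
    have dG : HasFDerivAt (fun c => G (c, t)) ((fderiv ℝ G (b, t)).comp
        (ContinuousLinearMap.inl ℝ (Evec n) ℝ)) b :=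
      aux_partial G hG1 b t
    have dv := ((hFd ((a, b), t)).comp b (hemb b t)).clm_apply
      (hasFDerivAt_const (((0, 0), 1) : (Evec n × Evec n) × ℝ) b)
    have dQ := (hQd ((a, b), t)).comp b (hemb b t)
    have dG' := HasFDerivAt.comp b (hLd (γ t)) (dQ.prodMk dv)
    rw [dG.unique dG', hsym, hp]
    simp only [inner_gradient_left]
    rw [← inner_gradient_left, ← inner_gradient_left, hg1, hg2]
    simp only [InnerProductSpace.toDual_symm_apply]
    rw [add_comm]
    simp only [ContinuousLinearMap.comp_apply, ContinuousLinearMap.inl_apply,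
      ContinuousLinearMap.inr_apply, hA]
    rw [← map_add]
    simp [hγ]
    rfl
  rw [intervalIntegral.integral_eq_sub_of_hasDerivAt key
    ((hGwc.add hfAc).intervalIntegrable _ _), hA0, hAh]
  simp
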